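/- arXiv:2011.12876 — 7 statements merged into one kernel-verified Lean document; each statement's English description precedes it below -/
import Mathlib

section
/- For every real number k ≠ 0 and every point v ∈ ℝ³, the Hessian determinant H_k of F_k satisfies H_k(v) = -54k²·F_{k'}(v), where k' = (4 - k³)/(3k²). In particular F_k(0, 0, 1) = -1 and H_k(0, 0, 1) = 54k² > 0. -/
noncomputable section

/-- The cubic form `F k (x,y,z) = -x^3 - y^3 - (z-x-y)^3 + 3k x y (z-x-y)`. -/
def F (k x y z : ℝ) : ℝ := -x^3 - y^3 - (z - x - y)^3 + 3*k*x*y*(z - x - y)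

/-- Partial derivative with respect to the first variable. -/
def pdx (f : ℝ → ℝ → ℝ → ℝ) (x y z : ℝ) : ℝ := deriv (fun t => f t y z) x

/-- Partial derivative with respect to the second variable. -/
def pdy (f : ℝ → ℝ → ℝ → ℝ) (x y z : ℝ) : ℝ := deriv (fun t => f x t z) y

/-- Partial derivative with respect to the third variable. -/
def pdz (f : ℝ → ℝ → ℝ → ℝ) (x y z : ℝ) : ℝ := deriv (fun t => f x y t) z

/-- The Hessian determinant of a function of three real variables: the determinant of
the 3×3 matrix of its second partial derivatives. -/
def hessDet (f : ℝ → ℝ → ℝ → ℝ) (x y z : ℝ) : ℝ :=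
  !![pdx (pdx f) x y z, pdy (pdx f) x y z, pdz (pdx f) x y z;
     pdx (pdy f) x y z, pdy (pdy f) x y z, pdz (pdy f) x y z;
     pdx (pdz f) x y z, pdy (pdz f) x y z, pdz (pdz f) x y z].det

/-- The gradient of a function of three real variables. -/
def grad (f : ℝ → ℝ → ℝ → ℝ) (x y z : ℝ) : ℝ × ℝ × ℝ :=
  (pdx f x y z, pdy f x y z, pdz f x y z)

/-- The dot product on `ℝ × ℝ × ℝ`. -/
def dot (a b : ℝ × ℝ × ℝ) : ℝ := a.1 * b.1 + a.2.1 * b.2.1 + a.2.2 * b.2.2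

theorem cub_deriv (f : ℝ → ℝ) (a b c d x : ℝ) (h : ∀ t, f t = a*t^3+b*t^2+c*t+d) :
    deriv f x = 3*a*x^2+2*b*x+c := by
  have hf : f = fun t => a*t^3+b*t^2+c*t+d := funext h
  rw [hf]
  have h1 := ((((hasDerivAt_pow 3 x).const_mul a).add ((hasDerivAt_pow 2 x).const_mul b)).add
    ((hasDerivAt_id x).const_mul c)).add_const d
  refine HasDerivAt.deriv (f' := 3*a*x^2+2*b*x+c) ?_
  convert h1 using 1
  · funext t
    simp
  · norm_num
    ring

theorem F_pdx (k : ℝ) : pdx (F k) =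
    fun x y z => -3*x^2 + 3*(z-x-y)^2 + 3*k*y*(z-x-y) - 3*k*x*y := by
  funext x y z
  unfold pdx F
  rw [cub_deriv _ 0 (-3*(z-y) - 3*k*y) (3*(z-y)^2+3*k*y*(z-y)) (-y^3-(z-y)^3) x
    (fun t => by ring)]
  ring

theorem F_pdy (k : ℝ) : pdy (F k) =
    fun x y z => -3*y^2 + 3*(z-x-y)^2 + 3*k*x*(z-x-y) - 3*k*x*y := by
  funext x y z
  unfold pdy F
  rw [cub_deriv _ 0 (-3*(z-x) - 3*k*x) (3*(z-x)^2+3*k*x*(z-x)) (-x^3-(z-x)^3) y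
    (fun t => by ring)]
  ring

theorem F_pdz (k : ℝ) : pdz (F k) =
    fun x y z => -3*(z-x-y)^2 + 3*k*x*y := by
  funext x y z
  unfold pdz F
  rw [cub_deriv _ (-1) (3*(x+y)) (-3*(x+y)^2+3*k*x*y) (-x^3-y^3+(x+y)^3-3*k*x*y*(x+y)) z
    (fun t => by ring)]
  ring

theorem F_hess (k x y z : ℝ) : hessDet (F k) x y z =
    54*k^2*(x^3+y^3+(z-x-y)^3) + (54*k^3-216)*(x*y*(z-x-y)) := by
  unfold hessDet
  rw [F_pdx, F_pdy, F_pdz]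
  unfold pdx pdy pdz
  simp only []
  rw [cub_deriv (fun t => -3*t^2 + 3*(z-t-y)^2 + 3*k*y*(z-t-y) - 3*k*t*y)
      0 0 (-6*(z-y)-6*k*y) (3*(z-y)^2+3*k*y*(z-y)) x (fun t => by ring),
    cub_deriv (fun t => -3*x^2 + 3*(z-x-t)^2 + 3*k*t*(z-x-t) - 3*k*x*t)
      0 (3-3*k) (-6*(z-x)+3*k*(z-x)-3*k*x) (-3*x^2+3*(z-x)^2) y (fun t => by ring),
    cub_deriv (fun t => -3*x^2 + 3*(t-x-y)^2 + 3*k*y*(t-x-y) - 3*k*x*y)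
      0 3 (-6*(x+y)+3*k*y) (-3*x^2+3*(x+y)^2-3*k*y*(x+y)-3*k*x*y) z (fun t => by ring),
    cub_deriv (fun t => -3*y^2 + 3*(z-t-y)^2 + 3*k*t*(z-t-y) - 3*k*t*y)
      0 (3-3*k) (-6*(z-y)+3*k*(z-y)-3*k*y) (-3*y^2+3*(z-y)^2) x (fun t => by ring),
    cub_deriv (fun t => -3*t^2 + 3*(z-x-t)^2 + 3*k*x*(z-x-t) - 3*k*x*t)
      0 0 (-6*(z-x)-6*k*x) (3*(z-x)^2+3*k*x*(z-x)) y (fun t => by ring),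
    cub_deriv (fun t => -3*y^2 + 3*(t-x-y)^2 + 3*k*x*(t-x-y) - 3*k*x*y)
      0 3 (-6*(x+y)+3*k*x) (-3*y^2+3*(x+y)^2-3*k*x*(x+y)-3*k*x*y) z (fun t => by ring),
    cub_deriv (fun t => -3*(z-t-y)^2 + 3*k*t*y)
      0 (-3) (6*(z-y)+3*k*y) (-3*(z-y)^2) x (fun t => by ring),
    cub_deriv (fun t => -3*(z-x-t)^2 + 3*k*x*t)
      0 (-3) (6*(z-x)+3*k*x) (-3*(z-x)^2) y (fun t => by ring),
    cub_deriv (fun t => -3*(t-x-y)^2 + 3*k*x*y)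
      0 (-3) (6*(x+y)) (-3*(x+y)^2+3*k*x*y) z (fun t => by ring)]
  rw [Matrix.det_fin_three]
  simp
  ring

theorem stmt_3 (k : ℝ) (hk : k ≠ 0) :
    (∀ x y z : ℝ, hessDet (F k) x y z = -54*k^2 * F ((4 - k^3)/(3*k^2)) x y z) ∧
    F k 0 0 1 = -1 ∧ hessDet (F k) 0 0 1 = 54*k^2 ∧ 54*k^2 > 0 := by
  refine ⟨fun x y z => ?_, ?_, ?_, by positivity⟩
  · rw [F_hess]
    unfold F
    field_simp
    ring
  · unfold F
    norm_num
  · rw [F_hess]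
    ring
end
end

section
/- For every real number k, the polar quadric of F_k with respect to the point (0, 0, 1) is given by (1/3)·∇F_k(x, y, z)·(0, 0, 1) = k·x·y - (z - x - y)² for all (x, y, z). Moreover, for k ≠ 0 this quadratic form on ℝ³ is nondegenerate of signature (1, 2), i.e. it is equivalent over ℝ to the form u² - v² - w². -/
noncomputable section

theorem stmt_10 (k : ℝ) :
    (∀ x y z : ℝ, (1/3) * dot (grad (F k) x y z) (0, 0, 1) = k*x*y - (z - x - y)^2) ∧
    (k ≠ 0 → ∃ L : (ℝ × ℝ × ℝ) ≃ₗ[ℝ] (ℝ × ℝ × ℝ),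
      ∀ v : ℝ × ℝ × ℝ, (1/3) * dot (grad (F k) v.1 v.2.1 v.2.2) (0, 0, 1)
        = (L v).1^2 - (L v).2.1^2 - (L v).2.2^2) := by
  have h1 : ∀ x y z : ℝ,
      (1/3) * dot (grad (F k) x y z) (0, 0, 1) = k*x*y - (z - x - y)^2 := by
    intro x y z
    have hu : HasDerivAt (fun t : ℝ => t - x - y) 1 z :=
      ((hasDerivAt_id z).sub_const x).sub_const y
    have hF : HasDerivAt (fun t : ℝ => F k x y t)
        (-(3 * (z - x - y)^2) + 3*k*x*y) z := by
      have h := ((hu.pow 3).const_sub (-x^3 - y^3)).add (hu.const_mul (3*k*x*y))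
      refine h.congr_deriv ?_
      norm_num
    have hd : pdz (F k) x y z = -(3 * (z - x - y)^2) + 3*k*x*y := hF.deriv
    simp only [dot, grad, hd]
    ring
  refine ⟨h1, fun hk => ?_⟩
  refine ⟨{ toFun := fun v => ((k*v.1 + v.2.1)/2, (k*v.1 - v.2.1)/2, v.2.2 - v.1 - v.2.1)
            invFun := fun w => ((w.1 + w.2.1)/k, w.1 - w.2.1,
              w.2.2 + (w.1 + w.2.1)/k + (w.1 - w.2.1))
            map_add' := ?_
            map_smul' := ?_
            left_inv := ?_
            right_inv := ?_ }, ?_⟩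
  · rintro ⟨a, b, c⟩ ⟨d, e, f⟩
    simp only [Prod.mk_add_mk, Prod.mk.injEq]
    refine ⟨?_, ?_, ?_⟩ <;> ring
  · rintro r ⟨a, b, c⟩
    simp only [Prod.smul_mk, smul_eq_mul, Prod.mk.injEq, RingHom.id_apply]
    refine ⟨?_, ?_, ?_⟩ <;> ring
  · rintro ⟨a, b, c⟩
    simp only [Prod.mk.injEq]
    refine ⟨?_, ?_, ?_⟩ <;> field_simp <;> ring
  · rintro ⟨a, b, c⟩
    simp only [Prod.mk.injEq]
    refine ⟨?_, ?_, ?_⟩ <;> field_simp <;> ring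
  · rintro ⟨a, b, c⟩
    rw [h1]
    simp only [LinearEquiv.coe_mk, LinearMap.coe_mk, AddHom.coe_mk]
    ring
end
end

section
/- The Hessian determinant of F_{-2} satisfies H_{-2}(x, y, z) = 216·z·q(x, y, z) for all (x, y, z), where q(x, y, z) = x² + y² + (z - x - y)² - xy - x(z - x - y) - y(z - x - y). Consequently, in the affine chart z = 1, H_{-2}(x, y, 1) ≥ 0 for all (x, y), with equality if and only if (x, y) = (1/3, 1/3). -/
noncomputable section

/-- The quadratic form `q`. -/
def q (x y z : ℝ) : ℝ :=
  x^2 + y^2 + (z - x - y)^2 - x*y - x*(z - x - y) - y*(z - x - y)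

theorem deriv_cubic (f : ℝ → ℝ) (a b c d x : ℝ)
    (h : ∀ t, f t = a*t^3 + b*t^2 + c*t + d) : deriv f x = 3*a*x^2 + 2*b*x + c := by
  have hf : f = fun t => a*t^3 + b*t^2 + c*t + d := funext h
  have h1 := ((((hasDerivAt_pow 3 x).const_mul a).add ((hasDerivAt_pow 2 x).const_mul b)).add
    ((hasDerivAt_id x).const_mul c)).add_const d
  have h2 : HasDerivAt f (3*a*x^2 + 2*b*x + c) x := by
    rw [hf]
    exact h1.congr_deriv (by push_cast; ring)
  exact h2.deriv

theorem pdx_F : pdx (F (-2)) = fun x y z => (3)*z^2 + (-6)*x^1*z^1 + (-12)*y^1*z^1 + (18)*x^1*y^1 + (9)*y^2 := by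
  funext x y z
  unfold pdx
  rw [deriv_cubic _ (0) ((-3)*z^1 + (9)*y^1) ((3)*z^2 + (-12)*y^1*z^1 + (9)*y^2) ((-1)*z^3 + (3)*y^1*z^2 + (-3)*y^2*z^1) x
    (by intro t; unfold F; ring)]
  ring

theorem pdy_F : pdy (F (-2)) = fun x y z => (3)*z^2 + (-12)*x^1*z^1 + (-6)*y^1*z^1 + (9)*x^2 + (18)*x^1*y^1 := by
  funext x y z
  unfold pdy
  rw [deriv_cubic _ (0) ((-3)*z^1 + (9)*x^1) ((3)*z^2 + (-12)*x^1*z^1 + (9)*x^2) ((-1)*z^3 + (3)*x^1*z^2 + (-3)*x^2*z^1) y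
    (by intro t; unfold F; ring)]
  ring

theorem pdz_F : pdz (F (-2)) = fun x y z => (-3)*z^2 + (6)*x^1*z^1 + (6)*y^1*z^1 + (-3)*x^2 + (-12)*x^1*y^1 + (-3)*y^2 := by
  funext x y z
  unfold pdz
  rw [deriv_cubic _ ((-1)) ((3)*x^1 + (3)*y^1) ((-3)*x^2 + (-12)*x^1*y^1 + (-3)*y^2) ((9)*x^2*y^1 + (9)*x^1*y^2) z
    (by intro t; unfold F; ring)]
  ring

theorem pdx_pdx_F : pdx (pdx (F (-2))) = fun x y z => (-6)*z^1 + (18)*y^1 := by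
  funext x y z
  rw [pdx_F]; unfold pdx
  rw [deriv_cubic _ (0) (0) ((-6)*z^1 + (18)*y^1) ((3)*z^2 + (-12)*y^1*z^1 + (9)*y^2) x
    (by intro t; ring)]
  ring

theorem pdy_pdx_F : pdy (pdx (F (-2))) = fun x y z => (-12)*z^1 + (18)*x^1 + (18)*y^1 := by
  funext x y z
  rw [pdx_F]; unfold pdy
  rw [deriv_cubic _ (0) ((9)) ((-12)*z^1 + (18)*x^1) ((3)*z^2 + (-6)*x^1*z^1) y
    (by intro t; ring)]
  ring

theorem pdz_pdx_F : pdz (pdx (F (-2))) = fun x y z => (6)*z^1 + (-6)*x^1 + (-12)*y^1 := by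
  funext x y z
  rw [pdx_F]; unfold pdz
  rw [deriv_cubic _ (0) ((3)) ((-6)*x^1 + (-12)*y^1) ((18)*x^1*y^1 + (9)*y^2) z
    (by intro t; ring)]
  ring

theorem pdx_pdy_F : pdx (pdy (F (-2))) = fun x y z => (-12)*z^1 + (18)*x^1 + (18)*y^1 := by
  funext x y z
  rw [pdy_F]; unfold pdx
  rw [deriv_cubic _ (0) ((9)) ((-12)*z^1 + (18)*y^1) ((3)*z^2 + (-6)*y^1*z^1) x
    (by intro t; ring)]
  ring

theorem pdy_pdy_F : pdy (pdy (F (-2))) = fun x y z => (-6)*z^1 + (18)*x^1 := by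
  funext x y z
  rw [pdy_F]; unfold pdy
  rw [deriv_cubic _ (0) (0) ((-6)*z^1 + (18)*x^1) ((3)*z^2 + (-12)*x^1*z^1 + (9)*x^2) y
    (by intro t; ring)]
  ring

theorem pdz_pdy_F : pdz (pdy (F (-2))) = fun x y z => (6)*z^1 + (-12)*x^1 + (-6)*y^1 := by
  funext x y z
  rw [pdy_F]; unfold pdz
  rw [deriv_cubic _ (0) ((3)) ((-12)*x^1 + (-6)*y^1) ((9)*x^2 + (18)*x^1*y^1) z
    (by intro t; ring)]
  ring

theorem pdx_pdz_F : pdx (pdz (F (-2))) = fun x y z => (6)*z^1 + (-6)*x^1 + (-12)*y^1 := by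
  funext x y z
  rw [pdz_F]; unfold pdx
  rw [deriv_cubic _ (0) ((-3)) ((6)*z^1 + (-12)*y^1) ((-3)*z^2 + (6)*y^1*z^1 + (-3)*y^2) x
    (by intro t; ring)]
  ring

theorem pdy_pdz_F : pdy (pdz (F (-2))) = fun x y z => (6)*z^1 + (-12)*x^1 + (-6)*y^1 := by
  funext x y z
  rw [pdz_F]; unfold pdy
  rw [deriv_cubic _ (0) ((-3)) ((6)*z^1 + (-12)*x^1) ((-3)*z^2 + (6)*x^1*z^1 + (-3)*x^2) y
    (by intro t; ring)]
  ring

theorem pdz_pdz_F : pdz (pdz (F (-2))) = fun x y z => (-6)*z^1 + (6)*x^1 + (6)*y^1 := by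
  funext x y z
  rw [pdz_F]; unfold pdz
  rw [deriv_cubic _ (0) ((-3)) ((6)*x^1 + (6)*y^1) ((-3)*x^2 + (-12)*x^1*y^1 + (-3)*y^2) z
    (by intro t; ring)]
  ring

theorem hess_F (x y z : ℝ) : hessDet (F (-2)) x y z = 216*z*q x y z := by
  unfold hessDet q
  rw [Matrix.det_fin_three]
  simp only [pdx_pdx_F, pdy_pdx_F, pdz_pdx_F, pdx_pdy_F, pdy_pdy_F, pdz_pdy_F, pdx_pdz_F, pdy_pdz_F, pdz_pdz_F, Matrix.of_apply, Matrix.cons_val]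
  ring

theorem q_one (x y : ℝ) : q x y 1 = 3*((x - 1/3) + (y - 1/3)/2)^2*1 + 9/4*(y-1/3)^2
    + 0 := by
  unfold q
  ring

theorem stmt_13 :
    (∀ x y z : ℝ, hessDet (F (-2)) x y z = 216*z*q x y z) ∧
    (∀ x y : ℝ, 0 ≤ hessDet (F (-2)) x y 1 ∧
      (hessDet (F (-2)) x y 1 = 0 ↔ (x, y) = ((1:ℝ)/3, (1:ℝ)/3))) := by
  refine ⟨hess_F, fun x y => ?_⟩
  rw [hess_F, q_one]
  refine ⟨by positivity, ?_⟩
  rw [Prod.mk.injEq]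
  constructor
  · intro h
    have hy : (y - 1/3)^2 = 0 := by
      nlinarith [sq_nonneg ((x - 1/3) + (y - 1/3)/2), sq_nonneg (y-1/3)]
    have hx : ((x - 1/3) + (y - 1/3)/2)^2 = 0 := by
      nlinarith [sq_nonneg ((x - 1/3) + (y - 1/3)/2), sq_nonneg (y-1/3)]
    have hy' := pow_eq_zero_iff (two_ne_zero) |>.1 hy
    have hx' := pow_eq_zero_iff (two_ne_zero) |>.1 hx
    constructor <;> linarith
  · rintro ⟨rfl, rfl⟩
    norm_num
end
end

section
/- Let W ⊆ ℝⁿ be a convex cone with nonempty interior, let D₀ be a nonzero point of the frontier of W, and let f : ℝⁿ → ℝ be a nonzero linear functional with f(D₀) = 0 and f(w) ≤ 0 for all w ∈ W. Assume D₀ is a smooth boundary point in the sense that every linear functional g with g(D₀) = 0 and g ≤ 0 on W is a nonnegative scalar multiple of f. Then for any point A ∈ ℝⁿ, the closed line segment joining A and D₀ is disjoint from the interior of W if and only if f(A) ≥ 0. -/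
noncomputable section

theorem stmt_15 {n : ℕ} (W : Set (Fin n → ℝ))
    (hWconv : Convex ℝ W)
    (hWcone : ∀ c : ℝ, 0 < c → ∀ w ∈ W, c • w ∈ W)
    (hWint : (interior W).Nonempty)
    (D₀ : Fin n → ℝ) (hD₀ : D₀ ∈ frontier W) (hD₀ne : D₀ ≠ 0)
    (f : (Fin n → ℝ) →ₗ[ℝ] ℝ) (hfne : f ≠ 0)
    (hfD₀ : f D₀ = 0) (hfW : ∀ w ∈ W, f w ≤ 0)
    (hsmooth : ∀ g : (Fin n → ℝ) →ₗ[ℝ] ℝ, g D₀ = 0 → (∀ w ∈ W, g w ≤ 0) →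
      ∃ c : ℝ, 0 ≤ c ∧ g = c • f) :
    ∀ A : Fin n → ℝ, segment ℝ A D₀ ∩ interior W = ∅ ↔ 0 ≤ f A := by
  have hneg : ∀ x ∈ interior W, ∀ g : (Fin n → ℝ) →ₗ[ℝ] ℝ, g ≠ 0 → (∀ w ∈ W, g w ≤ 0) →
      g x < 0 := by
    intro x hx g hg hgW
    refine lt_of_le_of_ne (hgW x (interior_subset hx)) fun h0 => hg ?_
    ext1 i
    have key : ∀ v, g v ≤ 0 := by
      intro v
      have hc : Filter.Tendsto (fun t : ℝ => x + t • v) (nhdsWithin 0 (Set.Ioi 0)) (nhds x) := by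
        have : Continuous (fun t : ℝ => x + t • v) := by fun_prop
        have h2 := this.tendsto 0
        simp only [zero_smul, add_zero] at h2
        exact h2.mono_left nhdsWithin_le_nhds
      have h3 := hc.eventually (mem_interior_iff_mem_nhds.mp hx)
      obtain ⟨t, ht, htp⟩ := (h3.and self_mem_nhdsWithin).exists
      have h4 := hgW _ ht
      have htp' : (0:ℝ) < t := htp
      simp only [map_add, map_smul, h0, zero_add, smul_eq_mul] at h4
      by_contra hcon
      push Not at hcon
      nlinarith [mul_pos htp' hcon]
    ext
    have h1 := key (Pi.single i 1)
    have h2 := key (-Pi.single i 1)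
    rw [map_neg] at h2
    simp
    linarith
  intro A
  constructor
  · intro hdis
    obtain ⟨g, u, hgi, hgs⟩ := geometric_hahn_banach_open hWconv.interior isOpen_interior
      (convex_segment A D₀) (by
        rw [Set.disjoint_iff_inter_eq_empty, Set.inter_comm]; exact hdis)
    have hcl : ∀ w ∈ closure W, g w ≤ u := by
      intro w hw
      rw [← hWconv.closure_interior_eq_closure_of_nonempty_interior hWint] at hw
      exact closure_minimal (fun a ha => (hgi a ha).le)
        (isClosed_le g.continuous continuous_const) hw
    have hcone : ∀ w ∈ W, ∀ c : ℝ, 0 < c → c * g w ≤ u := by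
      intro w hw c hc
      simpa using hcl _ (subset_closure (hWcone c hc w hw))
    obtain ⟨x, hx⟩ := hWint
    have hu : 0 ≤ u := by
      by_contra hcon
      push Not at hcon
      have h1 := hgi x hx
      have h2 : g x < 0 := h1.trans hcon
      have h3 := hcone x (interior_subset hx) (u / (2 * g x)) (div_pos_of_neg_of_neg hcon (by linarith))
      have h4 : u / (2 * g x) * g x = u / 2 := by
        have h5 := h2.ne
        field_simp
      linarith
    have hgW : ∀ w ∈ W, g w ≤ 0 := by
      intro w hw
      by_contra hcon
      push Not at hcon
      have h3 := hcone w hw ((u + 1) / g w) (by positivity)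
      rw [div_mul_cancel₀ _ hcon.ne'] at h3
      linarith
    have hgD : g D₀ ≤ 0 := closure_minimal (s := W) (t := {w | g w ≤ 0}) hgW
        (isClosed_le g.continuous continuous_const) hD₀.1
    have h5 := hgs D₀ (right_mem_segment ℝ A D₀)
    have h6 := hgs A (left_mem_segment ℝ A D₀)
    obtain ⟨c, hc, hgc⟩ := hsmooth g.toLinearMap (le_antisymm hgD (hu.trans h5)) hgW
    have hgv : ∀ v, g v = c * f v := fun v => by
      simpa using LinearMap.congr_fun hgc v
    have hc0 : 0 < c := by
      refine lt_of_le_of_ne hc fun h => ?_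
      subst h
      have h7 := hgi x hx
      rw [hgv] at h7
      rw [hgv] at h5
      linarith
    rw [hgv] at h6
    exact nonneg_of_mul_nonneg_right (hu.trans h6) hc0
  · intro hA
    rw [Set.eq_empty_iff_forall_notMem]
    rintro y ⟨⟨a, b, ha, hb, hab, rfl⟩, hy⟩
    have h1 := hneg _ hy f hfne hfW
    simp only [map_add, map_smul, smul_eq_mul, hfD₀] at h1
    nlinarith [mul_nonneg ha hA]
end
end

section
/- Let V be a finite-dimensional real vector space, T : V × V × V → ℝ a symmetric trilinear form, and C ⊆ V a convex cone (closed under addition and positive scalar multiplication) which is pointed, i.e. C ∩ (-C) ⊆ {0}. Assume that for every nonzero D ∈ C the bilinear form (X, Y) ↦ T(D, X, Y) is nondegenerate. Then the map D ↦ T(D, D, ·) is injective on C: if D₁, D₂ ∈ C satisfy T(D₁, D₁, X) = T(D₂, D₂, X) for all X ∈ V, then D₁ = D₂. -/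
noncomputable section

theorem stmt_16 {V : Type*} [AddCommGroup V] [Module ℝ V] [FiniteDimensional ℝ V]
    (T : V →ₗ[ℝ] V →ₗ[ℝ] V →ₗ[ℝ] ℝ)
    (hsymm₁ : ∀ x y z : V, T x y z = T y x z)
    (hsymm₂ : ∀ x y z : V, T x y z = T x z y)
    (C : Set V)
    (hCadd : ∀ x ∈ C, ∀ y ∈ C, x + y ∈ C)
    (hCsmul : ∀ c : ℝ, 0 < c → ∀ x ∈ C, c • x ∈ C)
    (hCpointed : C ∩ (-C) ⊆ {0})
    (hnd : ∀ D ∈ C, D ≠ 0 → ∀ X : V, (∀ Y : V, T D X Y = 0) → X = 0) :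
    ∀ D₁ ∈ C, ∀ D₂ ∈ C, (∀ X : V, T D₁ D₁ X = T D₂ D₂ X) → D₁ = D₂ := by
  intro D₁ h₁ D₂ h₂ h
  by_cases h0 : D₁ + D₂ = 0
  · have e : D₂ = -D₁ := (neg_eq_of_add_eq_zero_right h0).symm
    have hz : D₁ ∈ ({0} : Set V) := by
      apply hCpointed
      refine ⟨h₁, ?_⟩
      rw [Set.mem_neg, ← e]
      exact h₂
    have hz' : D₁ = 0 := hz
    rw [e, hz', neg_zero]
  · refine sub_eq_zero.mp (hnd _ (hCadd _ h₁ _ h₂) h0 _ ?_)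
    intro Y
    simp only [map_add, map_sub, LinearMap.add_apply, LinearMap.sub_apply]
    have a := h Y
    have b := hsymm₁ D₁ D₂ Y
    linarith
end
end

section
/- For all real a, b, c and all (x, y, z) ∈ ℝ³, the polar quadric of the cubic F_0 satisfies (1/3)·∇F_0(x, y, z)·(a, b, c) = -a·x² - b·y² + (a + b - c)·(z - x - y)². In particular, if a ≥ 0, b ≥ 0 and a + b ≤ c, then this polar quadric is ≤ 0 at every point of ℝ³. -/
noncomputable section

theorem stmt_17 (a b c : ℝ) :
    (∀ x y z : ℝ, (1/3) * dot (grad (F 0) x y z) (a, b, c)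
      = -a*x^2 - b*y^2 + (a + b - c)*(z - x - y)^2) ∧
    (0 ≤ a → 0 ≤ b → a + b ≤ c →
      ∀ x y z : ℝ, (1/3) * dot (grad (F 0) x y z) (a, b, c) ≤ 0) := by
  have key : ∀ x y z : ℝ, (1/3) * dot (grad (F 0) x y z) (a, b, c)
      = -a*x^2 - b*y^2 + (a + b - c)*(z - x - y)^2 := by
    intro x y z
    have hx : pdx (F 0) x y z = -3*x^2 + 3*(z-x-y)^2 := by
      have h : HasDerivAt (fun t : ℝ => -t^3 - y^3 - (z - t - y)^3) _ x :=
        (((hasDerivAt_id' x).pow 3).neg.sub_const (y^3)).sub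
          ((((hasDerivAt_id' x).const_sub z).sub_const y).pow 3)
      have e : (fun t : ℝ => F 0 t y z) = fun t : ℝ => -t^3 - y^3 - (z - t - y)^3 := by
        funext t; simp only [F]; ring
      unfold pdx
      rw [e, h.deriv]; norm_num; try ring
    have hy : pdy (F 0) x y z = -3*y^2 + 3*(z-x-y)^2 := by
      have h : HasDerivAt (fun t : ℝ => -t^3 - x^3 - (z - x - t)^3) _ y :=
        (((hasDerivAt_id' y).pow 3).neg.sub_const (x^3)).sub
          (((hasDerivAt_id' y).const_sub (z - x)).pow 3)
      have e : (fun t : ℝ => F 0 x t z) = fun t : ℝ => -t^3 - x^3 - (z - x - t)^3 := by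
        funext t; simp only [F]; ring
      unfold pdy
      rw [e, h.deriv]; norm_num; try ring
    have hz : pdz (F 0) x y z = -3*(z-x-y)^2 := by
      have h : HasDerivAt (fun t : ℝ => (-x^3 - y^3) - (t - x - y)^3) _ z :=
        ((((hasDerivAt_id' z).sub_const x).sub_const y).pow 3).const_sub (-x^3 - y^3)
      have e : (fun t : ℝ => F 0 x y t) = fun t : ℝ => (-x^3 - y^3) - (t - x - y)^3 := by
        funext t; simp only [F]; ring
      unfold pdz
      rw [e, h.deriv]; norm_num; try ring
    simp only [dot, grad, hx, hy, hz]
    ring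
  refine ⟨key, fun ha hb hc x y z => ?_⟩
  rw [key]
  have h1 := mul_nonneg ha (sq_nonneg x)
  have h2 := mul_nonneg hb (sq_nonneg y)
  have h3 := mul_nonneg (sub_nonneg.mpr hc) (sq_nonneg (z - x - y))
  linarith
end
end

section
/- For every real μ and all (x, y, z) ∈ ℝ³, the second polar of F_{-2} with respect to the point E = (-1, μ, 0) satisfies (1/3)·∇F_{-2}(-1, μ, 0)·(x, y, z) = 3μ(μ - 2)·x + 3(1 - 2μ)·y - (μ² - 4μ + 1)·z. This linear form vanishes at the centroid (1/3, 1/3, 1); consequently, if 1/2 < μ < 2, then its value at every point (x, y, 1) with x > 1/3 and y > 1/3 is strictly negative. -/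
noncomputable section

theorem stmt_18 (μ : ℝ) :
    (∀ x y z : ℝ, (1/3) * dot (grad (F (-2)) (-1) μ 0) (x, y, z)
      = 3*μ*(μ - 2)*x + 3*(1 - 2*μ)*y - (μ^2 - 4*μ + 1)*z) ∧
    (1/3) * dot (grad (F (-2)) (-1) μ 0) (1/3, 1/3, 1) = 0 ∧
    (1/2 < μ → μ < 2 → ∀ x y : ℝ, 1/3 < x → 1/3 < y →
      (1/3) * dot (grad (F (-2)) (-1) μ 0) (x, y, 1) < 0) := by
  have hi := fun a : ℝ => hasDerivAt_id' a
  have key : ∀ x y z : ℝ, (1/3) * dot (grad (F (-2)) (-1) μ 0) (x, y, z)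
      = 3*μ*(μ - 2)*x + 3*(1 - 2*μ)*y - (μ^2 - 4*μ + 1)*z := by
    intro x y z
    have h1 : pdx (F (-2)) (-1) μ 0 = 9*μ*(μ-2) := by
      have h : HasDerivAt (fun t : ℝ => 9*μ*t*t + (9*μ^2)*t) (9*μ*(μ-2)) (-1) := by
        have := ((((hi (-1)).const_mul (9*μ)).mul (hi (-1))).add ((hi (-1)).const_mul (9*μ^2)))
        exact this.congr_deriv (by ring)
      unfold pdx
      refine (h.congr_of_eventuallyEq (Filter.Eventually.of_forall fun t => ?_)).deriv
      simp only [F]; ring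
    have h2 : pdy (F (-2)) (-1) μ 0 = 9*(1-2*μ) := by
      have h : HasDerivAt (fun t : ℝ => (-9)*t*t + 9*t) (9*(1-2*μ)) μ := by
        have := ((((hi μ).const_mul (-9)).mul (hi μ)).add ((hi μ).const_mul 9))
        exact this.congr_deriv (by ring)
      unfold pdy
      refine (h.congr_of_eventuallyEq (Filter.Eventually.of_forall fun t => ?_)).deriv
      simp only [F]; ring
    have h3 : pdz (F (-2)) (-1) μ 0 = -3*(μ^2-4*μ+1) := by
      have h : HasDerivAt (fun t : ℝ => 1 - μ^3 - (t + (1-μ))^3 + 6*μ*(t+(1-μ))) (-3*(μ^2-4*μ+1)) 0 := by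
        have h0 := (hi 0).add_const (1-μ)
        have := ((h0.pow 3).const_sub (1-μ^3)).add (h0.const_mul (6*μ))
        exact this.congr_deriv (by norm_num; ring)
      unfold pdz
      refine (h.congr_of_eventuallyEq (Filter.Eventually.of_forall fun t => ?_)).deriv
      simp only [F]; ring
    simp only [dot, grad, h1, h2, h3]
    ring
  refine ⟨key, ?_, ?_⟩
  · rw [key]; ring
  · intro ha hb x y hx hy
    rw [key]
    have e1 : 0 < μ * (2 - μ) * (x - 1/3) := mul_pos (mul_pos (by linarith) (by linarith)) (by linarith)
    have e2 : 0 < (2*μ - 1) * (y - 1/3) := mul_pos (by linarith) (by linarith)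
    nlinarith
end
end
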